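/- Let (M,E,V) be a path geometry, ξ₀ ∈ Γ(E) a scale, f ∈ C^∞(M), and ξ̂₀ := e^f ξ₀. Let (∇,Π) and (∇̂,Π̂) be the Weyl structures associated to ξ₀ and ξ̂₀ respectively. Then for any ψ ∈ 𝔛(M): Π̂_E(ψ) = Π_E(ψ) + d^V f(q(ψ)) and Π̂_V(ψ) = Π_V(ψ) + ½ d^E f(q(ψ)). Consequently, with α, α̂ the one-forms characterized by Π_E = αξ₀ and Π̂_E = α̂ ξ̂₀, one has α̂(ψ) = e^{−f}(α(ψ) + α₀(d^V f(q(ψ)))), and for ξ ∈ Γ(E), η ∈ Γ(V): ι̂(𝓛(ξ,η)) = ι(𝓛(ξ,η)) − df(η) ξ − ½ df(ξ) η. -/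

import Mathlib

/-!
The argument compares the splittings `ι` and `ι̂`. Write `ζ(η) = ι(𝓛(σ,η))` for a scale `σ` and
`η ∈ Γ(V)`. Two consequences of the defining properties of a Weyl structure determine `ζ`:

* `τ(E,V) ⊂ ι(Q)` and `∇σ = 0` give `[σ,η] - ζ(η) = ∇_σ η ∈ Γ(V)`
  (`WeylStructure.lie_sub_eq_cov`), which fixes `ζ(η)` modulo `V`;
* `τ(H,ι(Q)) ⊂ H` and parallelism of `ι ∘ 𝓛` give `q[σ,ζ(η)] = 𝓛(σ,∇_σ η)`, hence
  `2 q[σ,ζ(η)] = q[σ,[σ,η]]` (`WeylStructure.two_q_lie`), which fixes the `V`-component since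
  `𝓛(σ,·)` is injective on `V` (`PathGeometry.levi_scale_injective`).

Replacing `σ = ξ₀` by `u ξ₀` with `du = u df`, the first identity shows that
`b := ι(𝓛(ξ₀,η)) - ι̂(𝓛(ξ₀,η)) - df(η) ξ₀` lies in `V`, and the second that
`2 𝓛(ξ₀,b) = df(ξ₀) 𝓛(ξ₀,η)`, so `b = ½ df(ξ₀) η` (`iota_change`). The formulas for `Π_E`, `Π_V`
follow by comparing the two decompositions of `ψ`, using `E ∩ V = 0`; the formula for `α` follows
because `ξ₀` trivializes `E`.
-/

/-!
An algebraic model of the smooth calculus on a smooth manifold `M`: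
`C` plays the role of the algebra `C^∞(M,ℝ)` of smooth functions and `X` plays the
role of the `C^∞(M,ℝ)`-module `𝔛(M)` of smooth vector fields, together with the Lie
bracket of vector fields and the derivative of functions along vector fields
(i.e. a Lie–Rinehart algebra over `ℝ`).  Distributions (smooth subbundles of `TM`)
are modelled as `C`-submodules of `X`, linear connections on `TM` as operators
`X → X → X` with the usual tensoriality and Leibniz properties, and one-forms as
`C`-linear maps `X →ₗ[C] C`.
-/

open scoped TensorProduct

/-- The algebra of smooth functions together with the module of smooth vector
fields on a smooth manifold, with the Lie bracket and directional derivative. -/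
structure VFCalc where
  /-- the smooth functions `C^∞(M,ℝ)` -/
  C : Type
  /-- the smooth vector fields `𝔛(M)` -/
  X : Type
  [ringC : CommRing C]
  [algC : Algebra ℝ C]
  [grpX : AddCommGroup X]
  [modX : Module C X]
  /-- the Lie bracket of vector fields -/
  lie : X → X → X
  /-- the derivative `D ψ f = ψ · f` of a function along a vector field -/
  D : X → C → C
  lie_add_left : ∀ ψ₁ ψ₂ φ, lie (ψ₁ + ψ₂) φ = lie ψ₁ φ + lie ψ₂ φ
  lie_skew : ∀ ψ φ, lie φ ψ = - lie ψ φ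
  jacobi : ∀ ψ₁ ψ₂ ψ₃, lie ψ₁ (lie ψ₂ ψ₃) = lie (lie ψ₁ ψ₂) ψ₃ + lie ψ₂ (lie ψ₁ ψ₃)
  lie_smul_right : ∀ (f : C) (ψ φ : X), lie ψ (f • φ) = f • lie ψ φ + (D ψ f) • φ
  D_add_left : ∀ ψ₁ ψ₂ f, D (ψ₁ + ψ₂) f = D ψ₁ f + D ψ₂ f
  D_smul_left : ∀ (g : C) ψ f, D (g • ψ) f = g * D ψ f
  D_add_right : ∀ ψ f₁ f₂, D ψ (f₁ + f₂) = D ψ f₁ + D ψ f₂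
  D_mul_right : ∀ ψ f₁ f₂, D ψ (f₁ * f₂) = f₁ * D ψ f₂ + f₂ * D ψ f₁
  D_algebraMap : ∀ ψ r, D ψ (algebraMap ℝ C r) = 0

attribute [instance] VFCalc.ringC VFCalc.algC VFCalc.grpX VFCalc.modX

/-- the exterior derivative of a one-form, `dα(ψ,φ) = ψ·α(φ) − φ·α(ψ) − α([ψ,φ])` -/
def VFCalc.dform (P : VFCalc) (α : P.X →ₗ[P.C] P.C) (ψ φ : P.X) : P.C :=
  P.D ψ (α φ) - P.D φ (α ψ) - α (P.lie ψ φ)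

/-- A (generalized) path geometry on a manifold `M` of dimension `2n+1`:
distributions `E, V ⊂ TM` (of rank `1` and `n`) with `E ∩ V = 0`, `V` involutive,
such that the Levi bracket induces an isomorphism `E ⊗ V ≅ Q := TM/(E ⊕ V)`. -/
structure PathGeometry extends VFCalc where
  /-- the rank one distribution `E` -/
  E : Submodule C X
  /-- the rank `n` distribution `V` -/
  V : Submodule C X
  inf_bot : E ⊓ V = ⊥
  involutive : ∀ η₁ ∈ V, ∀ η₂ ∈ V, lie η₁ η₂ ∈ V
  /-- the Levi bracket `E ⊗ V → Q = TM/(E ⊔ V)` is an isomorphism of bundles -/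
  leviIso : (↥E ⊗[C] ↥V) ≃ₗ[C] (X ⧸ (E ⊔ V))
  leviIso_apply : ∀ (ξ : ↥E) (η : ↥V),
    leviIso (ξ ⊗ₜ[C] η) = Submodule.Quotient.mk (lie (ξ : X) (η : X))

namespace PathGeometry

variable (P : PathGeometry)

/-- the corank one distribution `H = E ⊕ V` -/
def H : Submodule P.C P.X := P.E ⊔ P.V

/-- the quotient bundle `Q = TM/H` -/
abbrev Q := P.X ⧸ P.H

/-- the quotient projection `q : TM → Q` -/
def q : P.X →ₗ[P.C] P.Q := P.H.mkQ

/-- the Levi bracket `𝓛(ψ,φ) = q([ψ,φ])` -/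
def levi (ψ φ : P.X) : P.Q := P.q (P.lie ψ φ)

/-- the constant function `½` -/
noncomputable def half : P.C := algebraMap ℝ P.C (1/2)

/-- A (local) scale: a nowhere vanishing smooth section `ξ₀` of the line bundle `E`,
i.e. a trivialization of `E`, modelled as a basis of `E` as free rank one module. -/
structure IsScale (ξ₀ : P.X) : Prop where
  mem : ξ₀ ∈ P.E
  span : ∀ ξ ∈ P.E, ∃ f : P.C, ξ = f • ξ₀
  basis : ∀ f : P.C, f • ξ₀ = 0 → f = 0

end PathGeometry

/-- A linear connection on `TM`. -/
structure Conn (P : VFCalc) where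
  /-- the covariant derivative `cov ψ φ = ∇_ψ φ` -/
  cov : P.X → P.X → P.X
  add_left : ∀ ψ₁ ψ₂ φ, cov (ψ₁ + ψ₂) φ = cov ψ₁ φ + cov ψ₂ φ
  smul_left : ∀ (f : P.C) ψ φ, cov (f • ψ) φ = f • cov ψ φ
  add_right : ∀ ψ φ₁ φ₂, cov ψ (φ₁ + φ₂) = cov ψ φ₁ + cov ψ φ₂
  leibniz : ∀ (f : P.C) ψ φ, cov ψ (f • φ) = f • cov ψ φ + (P.D ψ f) • φ

namespace Conn

variable {P : VFCalc} (cn : Conn P)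

/-- the torsion `τ(ψ₁,ψ₂) = ∇_{ψ₁}ψ₂ − ∇_{ψ₂}ψ₁ − [ψ₁,ψ₂]` -/
def torsion (ψ₁ ψ₂ : P.X) : P.X := cn.cov ψ₁ ψ₂ - cn.cov ψ₂ ψ₁ - P.lie ψ₁ ψ₂

/-- the curvature `R(ψ₁,ψ₂)(ψ₃) = ∇_{ψ₁}∇_{ψ₂}ψ₃ − ∇_{ψ₂}∇_{ψ₁}ψ₃ − ∇_{[ψ₁,ψ₂]}ψ₃` -/
def curv (ψ₁ ψ₂ ψ₃ : P.X) : P.X :=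
  cn.cov ψ₁ (cn.cov ψ₂ ψ₃) - cn.cov ψ₂ (cn.cov ψ₁ ψ₃) - cn.cov (P.lie ψ₁ ψ₂) ψ₃

end Conn

/-- The Weyl structure associated to a scale `ξ₀`: a linear connection `∇` on `TM`
together with a decomposition `TM = E ⊕ V ⊕ ι(Q)` (encoded by the splitting
`ι : Q → TM` of `q`) such that `E`, `V`, `ι(Q)` are parallel, `∇ξ₀ = 0`,
`ι ∘ 𝓛 : E ⊗ V → ι(Q)` is parallel, the torsion satisfies `τ(E,V) ⊂ ι(Q)`,
`τ(H,ι(Q)) ⊂ H` and the normalization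
`𝓛(τ(ξ₀,ζ₁),η₂) = 2𝓛(ξ₀,τ(η₁,ζ₂))` for `ζᵢ = ι(𝓛(ξ₀,ηᵢ))`. -/
structure WeylStructure (P : PathGeometry) (ξ₀ : P.X) where
  conn : Conn P.toVFCalc
  ι : P.Q →ₗ[P.C] P.X
  q_ι : ∀ w, P.q (ι w) = w
  parE : ∀ ψ : P.X, ∀ ξ ∈ P.E, conn.cov ψ ξ ∈ P.E
  parV : ∀ ψ : P.X, ∀ η ∈ P.V, conn.cov ψ η ∈ P.V
  parQ : ∀ (ψ : P.X) (w : P.Q), conn.cov ψ (ι w) ∈ LinearMap.range ι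
  parScale : ∀ ψ : P.X, conn.cov ψ ξ₀ = 0
  parLevi : ∀ ψ : P.X, ∀ ξ ∈ P.E, ∀ η ∈ P.V,
    conn.cov ψ (ι (P.levi ξ η)) = ι (P.levi (conn.cov ψ ξ) η) + ι (P.levi ξ (conn.cov ψ η))
  torsEV : ∀ ξ ∈ P.E, ∀ η ∈ P.V, conn.torsion ξ η ∈ LinearMap.range ι
  torsHQ : ∀ ψ ∈ P.H, ∀ w : P.Q, conn.torsion ψ (ι w) ∈ P.H
  norm : ∀ η₁ ∈ P.V, ∀ η₂ ∈ P.V,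
    P.levi (conn.torsion ξ₀ (ι (P.levi ξ₀ η₁))) η₂
      = (2 : P.C) • P.levi ξ₀ (conn.torsion η₁ (ι (P.levi ξ₀ η₂)))

/-! ### Bracket identities and the Levi bracket -/

namespace VFCalc

variable (P : VFCalc)

lemma lie_add_right (ψ φ₁ φ₂ : P.X) : P.lie ψ (φ₁ + φ₂) = P.lie ψ φ₁ + P.lie ψ φ₂ := by
  rw [P.lie_skew (φ₁ + φ₂), P.lie_add_left, P.lie_skew ψ φ₁, P.lie_skew ψ φ₂]
  abel

lemma lie_neg_right (ψ φ : P.X) : P.lie ψ (-φ) = -P.lie ψ φ := by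
  have h0 : P.lie ψ 0 = 0 := by
    have h := P.lie_add_right ψ 0 0
    simpa using h
  have h := P.lie_add_right ψ φ (-φ)
  rw [add_neg_cancel, h0] at h
  exact (neg_eq_of_add_eq_zero_right h.symm).symm

lemma lie_sub_right (ψ φ₁ φ₂ : P.X) : P.lie ψ (φ₁ - φ₂) = P.lie ψ φ₁ - P.lie ψ φ₂ := by
  rw [sub_eq_add_neg, lie_add_right, lie_neg_right, ← sub_eq_add_neg]

lemma lie_zero_left (φ : P.X) : P.lie 0 φ = 0 := by
  have h := P.lie_add_left 0 0 φ
  simpa using h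

lemma lie_smul_left (g : P.C) (ψ φ : P.X) :
    P.lie (g • ψ) φ = g • P.lie ψ φ - P.D φ g • ψ := by
  rw [P.lie_skew φ (g • ψ), P.lie_smul_right, P.lie_skew ψ φ]
  module

end VFCalc

namespace PathGeometry

variable (P : PathGeometry)

lemma half_add_half : P.half + P.half = 1 := by
  unfold half
  rw [← map_add]
  norm_num

lemma eq_of_two_smul_eq {M : Type} [AddCommGroup M] [Module P.C M] {x y : M}
    (h : (2 : P.C) • x = y) : x = P.half • y := by
  have h2 : P.half * 2 = 1 := by rw [mul_two, half_add_half]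
  rw [← h, smul_smul, h2, one_smul]

lemma lie_self (ψ : P.X) : P.lie ψ ψ = 0 := by
  have h : (2 : P.C) • P.lie ψ ψ = 0 := by
    rw [two_smul]
    nth_rewrite 1 [P.lie_skew ψ ψ]
    exact neg_add_cancel _
  rw [P.eq_of_two_smul_eq h, smul_zero]

lemma q_of_mem_H {ψ : P.X} (h : ψ ∈ P.H) : P.q ψ = 0 :=
  (Submodule.Quotient.mk_eq_zero _).2 h

lemma q_of_mem_E {ψ : P.X} (h : ψ ∈ P.E) : P.q ψ = 0 :=
  P.q_of_mem_H (Submodule.mem_sup_left h)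

lemma q_of_mem_V {ψ : P.X} (h : ψ ∈ P.V) : P.q ψ = 0 :=
  P.q_of_mem_H (Submodule.mem_sup_right h)

lemma levi_smul_left (g : P.C) {ξ : P.X} (hξ : ξ ∈ P.E) (φ : P.X) :
    P.levi (g • ξ) φ = g • P.levi ξ φ := by
  unfold levi
  rw [P.lie_smul_left, map_sub, map_smul, map_smul, P.q_of_mem_E hξ, smul_zero, sub_zero]

/-- `𝓛(σ,·)` is injective on `V` for a scale `σ`: trivializing `E` by `σ` identifies `E ⊗ V`
with `V`, so `σ ⊗ η` determines `η`. -/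
lemma levi_scale_injective {σ : P.X} (hσ : P.IsScale σ) {η₁ η₂ : P.X} (h₁ : η₁ ∈ P.V)
    (h₂ : η₂ ∈ P.V) (h : P.levi σ η₁ = P.levi σ η₂) : η₁ = η₂ := by
  let s : ↥P.E := ⟨σ, hσ.mem⟩
  have hb : Function.Bijective (LinearMap.toSpanSingleton P.C (↥P.E) s) := by
    constructor
    · refine (injective_iff_map_eq_zero _).2 fun g hg => hσ.basis g ?_
      exact congrArg Subtype.val hg
    · rintro ⟨ξ, hξ⟩
      obtain ⟨g, rfl⟩ := hσ.span ξ hξ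
      exact ⟨g, rfl⟩
  let e : P.C ≃ₗ[P.C] ↥P.E := LinearEquiv.ofBijective _ hb
  have he : e 1 = s := by simp [e]
  have ht : s ⊗ₜ[P.C] (⟨η₁, h₁⟩ : ↥P.V) = s ⊗ₜ[P.C] (⟨η₂, h₂⟩ : ↥P.V) := by
    apply P.leviIso.injective
    rw [P.leviIso_apply, P.leviIso_apply]
    exact h
  have h' := congrArg (fun t => TensorProduct.lid P.C (↥P.V)
    (TensorProduct.map e.symm.toLinearMap LinearMap.id t)) ht
  have hs : e.symm s = 1 := by rw [← he, e.symm_apply_apply]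
  simpa [hs] using h'

end PathGeometry

/-! ### The splitting of a Weyl structure and its change under rescaling -/

namespace WeylStructure

variable {P : PathGeometry} {σ : P.X} (W : WeylStructure P σ)

/-- Follows from `τ(σ,η) ∈ ι(Q)` and `∇σ = 0`: applying `q` shows `τ(σ,η) = -ι(𝓛(σ,η))`. In
particular `ι(𝓛(σ,η))` agrees with `[σ,η]` modulo `V`. -/
lemma lie_sub_eq_cov (hσ : σ ∈ P.E) {η : P.X} (hη : η ∈ P.V) :
    P.lie σ η - W.ι (P.levi σ η) = W.conn.cov σ η := by
  obtain ⟨w, hw⟩ := W.torsEV σ hσ η hη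
  rw [Conn.torsion, W.parScale, sub_zero] at hw
  have hq := congrArg P.q hw
  rw [W.q_ι, map_sub, P.q_of_mem_V (W.parV σ η hη), zero_sub] at hq
  have hw' : w = -P.levi σ η := hq
  rw [hw', map_neg] at hw
  rw [sub_eq_add_neg, hw]
  abel

/-- Follows from `τ(σ,ι(𝓛(σ,η))) ∈ H`, using that `ι ∘ 𝓛` and `σ` are parallel. -/
lemma q_lie_ι (hσ : σ ∈ P.E) {η : P.X} (hη : η ∈ P.V) :
    P.q (P.lie σ (W.ι (P.levi σ η))) = P.levi σ (W.conn.cov σ η) := by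
  have h := P.q_of_mem_H (W.torsHQ σ (Submodule.mem_sup_left hσ) (P.levi σ η))
  have h0 : P.levi 0 η = 0 := by unfold PathGeometry.levi; rw [P.lie_zero_left, map_zero]
  rw [Conn.torsion, W.parScale, sub_zero, W.parLevi σ σ hσ η hη, W.parScale, h0, map_zero,
    zero_add, map_sub, W.q_ι, sub_eq_zero] at h
  exact h.symm

/-- The value `q[σ,ι(𝓛(σ,η))]`, which fixes `ι(𝓛(σ,η))` up to `E`, in terms of brackets with `σ`
only. The connection is eliminated between `lie_sub_eq_cov` and `q_lie_ι`. -/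
lemma two_q_lie (hσ : σ ∈ P.E) {η : P.X} (hη : η ∈ P.V) :
    (2 : P.C) • P.q (P.lie σ (W.ι (P.levi σ η))) = P.q (P.lie σ (P.lie σ η)) := by
  have h := W.q_lie_ι hσ hη
  simp only [← W.lie_sub_eq_cov hσ hη, PathGeometry.levi, P.lie_sub_right, map_sub] at h
  rw [two_smul, PathGeometry.levi]
  nth_rewrite 1 [h]
  exact sub_add_cancel _ _

end WeylStructure

/-- The change of the splitting `ι` on `𝓛(ξ₀,η)` under the rescaling `ξ₀ ↦ u ξ₀`,
where `u` plays the role of `e^f`. -/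
lemma iota_change {P : PathGeometry} {ξ₀ : P.X} (hξ₀ : P.IsScale ξ₀) {u f : P.C}
    (hu : IsUnit u) (hDu : ∀ ψ : P.X, P.D ψ u = u * P.D ψ f)
    (W : WeylStructure P ξ₀) (W' : WeylStructure P (u • ξ₀)) {η : P.X} (hη : η ∈ P.V) :
    W'.ι (P.levi ξ₀ η)
      = W.ι (P.levi ξ₀ η) - P.D η f • ξ₀ - (P.half * P.D ξ₀ f) • η := by
  obtain ⟨s, hs⟩ := hu.exists_left_inv
  have hE := hξ₀.mem
  have hE' : u • ξ₀ ∈ P.E := P.E.smul_mem u hE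
  have hι : W'.ι (P.levi (u • ξ₀) η) = u • W'.ι (P.levi ξ₀ η) := by
    rw [P.levi_smul_left u hE, map_smul]
  have hA := W.lie_sub_eq_cov hE hη
  have hA' := W'.lie_sub_eq_cov hE' hη
  have hC := W.two_q_lie hE hη
  have hC' := W'.two_q_lie hE' hη
  rw [hι] at hA' hC'
  have hqζ : P.q (W'.ι (P.levi ξ₀ η)) = P.levi ξ₀ η := W'.q_ι _
  -- `q[u ξ₀, ·] = u q[ξ₀, ·]`, so one factor of `u` cancels from the second identity.
  have hL : ∀ φ, P.q (P.lie (u • ξ₀) φ) = u • P.q (P.lie ξ₀ φ) :=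
    fun φ => P.levi_smul_left u hE φ
  have hself : P.q (P.lie ξ₀ ξ₀) = 0 := by rw [P.lie_self, map_zero]
  set ζ := W.ι (P.levi ξ₀ η)
  set ζ' := W'.ι (P.levi ξ₀ η)
  have hcancel : ∀ {M : Type} [AddCommGroup M] [Module P.C M] (x y : M),
      u • x = u • y → x = y := by
    intro M _ _ x y h
    have := congrArg (fun z => s • z) h
    simpa [smul_smul, hs] using this
  have hb : ζ - ζ' - P.D η f • ξ₀ ∈ P.V := by
    have hV : s • W'.conn.cov (u • ξ₀) η - W.conn.cov ξ₀ η ∈ P.V :=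
      P.V.sub_mem (P.V.smul_mem _ (W'.parV _ _ hη)) (W.parV _ _ hη)
    rw [← hA, ← hA', P.lie_smul_left, hDu] at hV
    convert hV using 1
    have : ∀ x : P.X, s • u • x = x := fun x => by rw [smul_smul, hs, one_smul]
    simp only [smul_sub, mul_smul, this]
    abel
  have hC2 : (2 : P.C) • P.q (P.lie ξ₀ ζ') + P.D ξ₀ f • P.levi ξ₀ η
      = (2 : P.C) • P.q (P.lie ξ₀ ζ) := by
    rw [hC]
    rw [hL, hL, smul_comm] at hC'
    have h1 := hcancel _ _ hC'
    rw [P.lie_smul_right, P.lie_smul_left, P.lie_sub_right, P.lie_smul_right,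
      P.lie_smul_right] at h1
    simp only [map_add, map_sub, map_smul, hself, hqζ, P.q_of_mem_E hE, hDu] at h1
    apply hcancel
    have hdef : P.levi ξ₀ η = P.q (P.lie ξ₀ η) := rfl
    rw [hdef] at h1 ⊢
    linear_combination (norm := module) h1
  have hb2 : ζ - ζ' - P.D η f • ξ₀ = (P.half * P.D ξ₀ f) • η := by
    refine P.levi_scale_injective hξ₀ hb (P.V.smul_mem _ hη) ?_
    have h2 : (2 : P.C) • P.levi ξ₀ (ζ - ζ' - P.D η f • ξ₀) = P.D ξ₀ f • P.levi ξ₀ η := by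
      rw [PathGeometry.levi, P.lie_sub_right, P.lie_sub_right, P.lie_smul_right]
      simp only [map_add, map_sub, map_smul, hself, P.q_of_mem_E hE]
      linear_combination (norm := module) -hC2
    rw [P.eq_of_two_smul_eq h2, smul_smul, PathGeometry.levi, PathGeometry.levi,
      P.lie_smul_right, map_add, map_smul, map_smul, P.q_of_mem_V hη, smul_zero, add_zero]
  rw [← hb2]
  abel

/-- Proposition 4.1 (i) of the paper.  Let `(M,E,V)` be a path
geometry, `ξ₀ ∈ Γ(E)` a scale and `ξ̂₀ := e^f ξ₀` the rescaled scale; here the positive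
function `e^f` is modelled as an invertible `u ∈ C` with `d(u) = u·df`, so
`ξ̂₀ = u • ξ₀`.  Let `(∇,Π)` and `(∇̂,Π̂)` be the Weyl structures associated to `ξ₀`
and `ξ̂₀` (with splittings `ι`, `ι̂` and projections `Π_E ⊕ Π_V`, `Π̂_E ⊕ Π̂_V`), and
let `α`, `α̂` be the one-forms with `Π_E = α ξ₀` and `Π̂_E = α̂ ξ̂₀`.  Using the
components `d^E f`, `d^V f` of `df` as maps on `Q ≅ E ⊗ V` (so that for
`q(ψ) = 𝓛(ξ₀,η)` one has `d^V f(q(ψ)) = df(η) ξ₀` and `d^E f(q(ψ)) = df(ξ₀) η`),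
one has: `Π̂_E(ψ) = Π_E(ψ) + d^V f(q(ψ))`, `Π̂_V(ψ) = Π_V(ψ) + ½ d^E f(q(ψ))`,
consequently `α̂(ψ) = e^{-f}(α(ψ) + α₀(d^V f(q(ψ))))`, and for `ξ ∈ Γ(E)`, `η ∈ Γ(V)`:
`ι̂(𝓛(ξ,η)) = ι(𝓛(ξ,η)) − df(η) ξ − ½ df(ξ) η`. -/
theorem change_of_scale_projections (P : PathGeometry) (ξ₀ : P.X) (hξ₀ : P.IsScale ξ₀)
    (u f : P.C) (hu : IsUnit u) (hDu : ∀ ψ : P.X, P.D ψ u = u * P.D ψ f)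
    (W : WeylStructure P ξ₀) (W' : WeylStructure P (u • ξ₀))
    (PiE PiV PiE' PiV' : P.X →ₗ[P.C] P.X)
    (hPiE : ∀ ψ, PiE ψ ∈ P.E) (hPiV : ∀ ψ, PiV ψ ∈ P.V)
    (hdec : ∀ ψ, ψ = PiE ψ + PiV ψ + W.ι (P.q ψ))
    (hPiE' : ∀ ψ, PiE' ψ ∈ P.E) (hPiV' : ∀ ψ, PiV' ψ ∈ P.V)
    (hdec' : ∀ ψ, ψ = PiE' ψ + PiV' ψ + W'.ι (P.q ψ))
    (α α' : P.X →ₗ[P.C] P.C)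
    (hα : ∀ ψ, PiE ψ = α ψ • ξ₀) (hα' : ∀ ψ, PiE' ψ = α' ψ • (u • ξ₀)) :
    (∀ ψ : P.X, ∀ η ∈ P.V, P.q ψ = P.levi ξ₀ η →
      PiE' ψ = PiE ψ + (P.D η f) • ξ₀ ∧
      PiV' ψ = PiV ψ + (P.half * P.D ξ₀ f) • η) ∧
    (∀ ψ : P.X, ∀ η ∈ P.V, P.q ψ = P.levi ξ₀ η →
      u * α' ψ = α ψ + P.D η f) ∧
    (∀ ξ ∈ P.E, ∀ η ∈ P.V,
      W'.ι (P.levi ξ η)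
        = W.ι (P.levi ξ η) - (P.D η f) • ξ - (P.half * P.D ξ f) • η) := by
  have hι := fun {η : P.X} (hη : η ∈ P.V) => iota_change hξ₀ hu hDu W W' hη
  have key : ∀ ψ : P.X, ∀ η ∈ P.V, P.q ψ = P.levi ξ₀ η →
      PiE' ψ = PiE ψ + (P.D η f) • ξ₀ ∧
      PiV' ψ = PiV ψ + (P.half * P.D ξ₀ f) • η := by
    intro ψ η hη hq
    have h1 := hdec ψ
    have h2 := hdec' ψ
    rw [hq] at h1 h2
    rw [hι hη] at h2
    -- The two decompositions of `ψ` differ by an element of `E ∩ V = 0`.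
    have h : PiE' ψ - (PiE ψ + P.D η f • ξ₀)
        = PiV ψ + (P.half * P.D ξ₀ f) • η - PiV' ψ := by
      rw [← sub_eq_zero]
      have h3 := h2.symm.trans h1
      rw [← sub_eq_zero] at h3
      rw [← h3]
      abel
    have hmE : PiE' ψ - (PiE ψ + P.D η f • ξ₀) ∈ P.E :=
      P.E.sub_mem (hPiE' ψ) (P.E.add_mem (hPiE ψ) (P.E.smul_mem _ hξ₀.mem))
    have hmV : PiE' ψ - (PiE ψ + P.D η f • ξ₀) ∈ P.V := by
      rw [h]
      exact P.V.sub_mem (P.V.add_mem (hPiV ψ) (P.V.smul_mem _ hη)) (hPiV' ψ)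
    have h0 : PiE' ψ - (PiE ψ + P.D η f • ξ₀) = 0 := by
      have hm : PiE' ψ - (PiE ψ + P.D η f • ξ₀) ∈ P.E ⊓ P.V := ⟨hmE, hmV⟩
      rwa [P.inf_bot, Submodule.mem_bot] at hm
    exact ⟨sub_eq_zero.1 h0, (sub_eq_zero.1 (h.symm.trans h0)).symm⟩
  refine ⟨key, ?_, ?_⟩
  · intro ψ η hη hq
    have h := (key ψ η hη hq).1
    rw [hα, hα', smul_smul, ← add_smul, ← sub_eq_zero, ← sub_smul] at h
    rw [mul_comm u]
    exact sub_eq_zero.1 (hξ₀.basis _ h)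
  · intro ξ hξ η hη
    obtain ⟨g, rfl⟩ := hξ₀.span ξ hξ
    rw [P.levi_smul_left g hξ₀.mem, map_smul, map_smul, hι hη, P.D_smul_left]
    module
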